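/- Let k = k(n) be a function of n with k(n)² = o(n) as n→∞, and let Len_k denote the set of chords of C_n of length at least k. Then with high probability, every chord in Len_k crosses at least k other chords of Len_k (i.e., the minimum degree of the subdiagram Len_k is at least k). Consequently, with high probability the k-core of C_n equals Len_k. -/

import Mathlib

open scoped Classical
open Finset Filter

/-- A chord diagram of size `n`: a fixed-point-free involution of the `2n`
endpoints `0, 1, …, 2n-1` (endpoint `i` here corresponds to the label `i+1`). -/
abbrev ChordDiagram (n : ℕ) :=
  {f : Fin (2*n) → Fin (2*n) // (∀ i, f (f i) = i) ∧ ∀ i, f i ≠ i}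

/-- `c` lies strictly between `a` and `b`. -/
def Between {m : ℕ} (a b c : Fin m) : Prop := min a b < c ∧ c < max a b

/-- The chord of `C` containing endpoint `x` crosses the chord containing endpoint `u`:
exactly one of the two endpoints `u`, `C u` lies strictly between `x` and `C x`. -/
def Crosses {n : ℕ} (C : ChordDiagram n) (x u : Fin (2*n)) : Prop :=
  Xor' (Between x (C.1 x) u) (Between x (C.1 x) (C.1 u))

/-- Uniform probability of an event over all chord diagrams of size `n`. -/
noncomputable def prob (n : ℕ) (E : ChordDiagram n → Prop) : ℝ :=
  ((Finset.univ.filter E).card : ℝ) / ((Finset.univ : Finset (ChordDiagram n)).card : ℝ)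

/-- The degree of the chord of `C` containing endpoint `x`: the number of chords
crossing it (each chord counted once via its smaller endpoint). -/
noncomputable def chordDegree {n : ℕ} (C : ChordDiagram n) (x : Fin (2*n)) : ℕ :=
  (Finset.univ.filter fun u => u < C.1 u ∧ Crosses C x u).card

/-- The length of the chord of `C` containing endpoint `x`: the number of endpoints
on the smaller of the two arcs it determines. -/
def chordLength {n : ℕ} (C : ChordDiagram n) (x : Fin (2*n)) : ℕ :=
  min (max (x:ℕ) (C.1 x : ℕ) - min (x:ℕ) (C.1 x : ℕ) - 1)
      (2*n - (max (x:ℕ) (C.1 x : ℕ) - min (x:ℕ) (C.1 x : ℕ)) - 1)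

/-- Degree of the chord containing endpoint `1` (index `0`). -/
noncomputable def degreeC1 (n : ℕ) (C : ChordDiagram n) : ℕ :=
  if h : 0 < n then chordDegree C ⟨0, by omega⟩ else 0

/-- Length of the chord containing endpoint `1` (index `0`). -/
noncomputable def lengthC1 (n : ℕ) (C : ChordDiagram n) : ℕ :=
  if h : 0 < n then chordLength C ⟨0, by omega⟩ else 0

/-- Membership in the component (w.r.t. the crossing relation) of the chord
containing the root endpoint. -/
def InRootComponent {n : ℕ} (C : ChordDiagram n) (root x : Fin (2*n)) : Prop :=
  x = root ∨ x = C.1 root ∨ Relation.ReflTransGen (fun a b => Crosses C a b) root x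

/-- The chord containing `x` is simple: it joins two (cyclically) consecutive endpoints. -/
def IsSimple {n : ℕ} (C : ChordDiagram n) (x : Fin (2*n)) : Prop :=
  (C.1 x : ℕ) = ((x : ℕ) + 1) % (2*n) ∨ (x : ℕ) = ((C.1 x : ℕ) + 1) % (2*n)

/-- `C` is monolithic (with respect to `root`): every chord not in the root
component is simple, and no two simple chords are next to each other. -/
def Monolithic {n : ℕ} (C : ChordDiagram n) (root : Fin (2*n)) : Prop :=
  (∀ x : Fin (2*n), ¬ InRootComponent C root x → IsSimple C x) ∧
  ¬ ∃ i : Fin (2*n), (C.1 i : ℕ) = ((i : ℕ) + 1) % (2*n) ∧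
      ∃ j : Fin (2*n), (j : ℕ) = ((i : ℕ) + 2) % (2*n) ∧ (C.1 j : ℕ) = ((i : ℕ) + 3) % (2*n)

/-- `L_j`: the number of chords of length `j` in `C`. -/
noncomputable def lengthCount (n : ℕ) (j : ℕ) (C : ChordDiagram n) : ℕ :=
  (Finset.univ.filter fun x : Fin (2*n) => x < C.1 x ∧ chordLength C x = j).card

/-- The endpoints of chords of `C` of length at least `k`. -/
noncomputable def lenAtLeast (n k : ℕ) (C : ChordDiagram n) : Finset (Fin (2*n)) :=
  Finset.univ.filter fun x => k ≤ chordLength C x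

/-- The number of chords with endpoints in `S` crossing the chord containing `x`. -/
noncomputable def degreeIn {n : ℕ} (C : ChordDiagram n) (S : Finset (Fin (2*n)))
    (x : Fin (2*n)) : ℕ :=
  (S.filter fun u => u < C.1 u ∧ Crosses C x u).card

/-- `S` (a chord-closed set of endpoints) is a set of chords each crossing at
least `k` other chords of `S`. -/
def IsCore {n : ℕ} (C : ChordDiagram n) (k : ℕ) (S : Finset (Fin (2*n))) : Prop :=
  (∀ x ∈ S, C.1 x ∈ S) ∧ ∀ x ∈ S, k ≤ degreeIn C S x

/-- The `k`-core: the union of all sets of chords in which every chord crosses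
at least `k` other chords of the set. -/
noncomputable def kCore (n k : ℕ) (C : ChordDiagram n) : Finset (Fin (2*n)) :=
  Finset.univ.filter fun x => ∃ S : Finset (Fin (2*n)), IsCore C k S ∧ x ∈ S

/-- The number of chords in the `k`-core of `C`. -/
noncomputable def kCoreSize (n k : ℕ) (C : ChordDiagram n) : ℕ :=
  ((kCore n k C).filter fun x => x < C.1 x).card

/-- `Z_k`: the number of chords of length strictly less than `k`. -/
noncomputable def shortCount (n k : ℕ) (C : ChordDiagram n) : ℕ :=
  (Finset.univ.filter fun x : Fin (2*n) => x < C.1 x ∧ chordLength C x < k).card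

/-- `C` contains a balanced clique of size `m`: a set of `m` pairwise crossing
chords with exactly one endpoint in each of the `2m` blocks of length `⌊n/m⌋`. -/
def HasBalancedClique (n m : ℕ) (C : ChordDiagram n) : Prop :=
  ∃ S : Finset (Fin (2*n)),
    (∀ x ∈ S, C.1 x ∈ S) ∧
    (∀ x ∈ S, ∀ u ∈ S, u ≠ x → u ≠ C.1 x → Crosses C x u) ∧
    (∀ t : ℕ, 1 ≤ t → t ≤ 2*m →
      (S.filter fun x => (t-1) * (n/m) ≤ (x:ℕ) ∧ (x:ℕ) < t * (n/m)).card = 1)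

/-- An oriented chord diagram: a chord diagram together with auxiliary fair-coin
bits; the bit attached to a crossing pair of chords (indexed by their smaller
endpoints) decides which chord over-crosses the other. -/
abbrev OrientedChordDiagram (n : ℕ) := ChordDiagram n × (Fin (2*n) → Fin (2*n) → Bool)

/-- The smaller endpoint of the chord of `C` containing `x`. -/
def chordRep {n : ℕ} (C : ChordDiagram n) (x : Fin (2*n)) : Fin (2*n) := min x (C.1 x)

/-- In the oriented diagram `D`, the chord containing `x` crosses and
over-crosses the chord containing `u`. -/
def OverD {n : ℕ} (D : OrientedChordDiagram n) (x u : Fin (2*n)) : Prop :=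
  Crosses D.1 x u ∧
    ((chordRep D.1 x ≤ chordRep D.1 u ∧ D.2 (chordRep D.1 x) (chordRep D.1 u) = true) ∨
     (chordRep D.1 u < chordRep D.1 x ∧ D.2 (chordRep D.1 u) (chordRep D.1 x) = false))

/-- Uniform probability of an event over all oriented chord diagrams of size `n`
(this yields a uniformly random diagram with each crossing oriented by an
independent fair coin). -/
noncomputable def probD (n : ℕ) (E : OrientedChordDiagram n → Prop) : ℝ :=
  ((Finset.univ.filter E).card : ℝ) /
    ((Finset.univ : Finset (OrientedChordDiagram n)).card : ℝ)

/-- The chords (given by their endpoints in `S`) are strongly connected in the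
directed intersection graph of `D`, using only chords of `S`. -/
def StronglyConnectedIn {n : ℕ} (D : OrientedChordDiagram n) (S : Set (Fin (2*n))) : Prop :=
  ∀ c ∈ S, ∀ d ∈ S,
    Relation.ReflTransGen (fun a b => a ∈ S ∧ b ∈ S ∧ OverD D a b) c d

/-- The number of chords with both endpoints in the cyclic block
`{i, i+1, …, i+t-1}` (mod `2n`). -/
noncomputable def chordsInBlock (n : ℕ) (C : ChordDiagram n) (i t : ℕ) : ℕ :=
  (Finset.univ.filter fun x : Fin (2*n) => x < C.1 x ∧
    (∃ a < t, (x:ℕ) = (i + a) % (2*n)) ∧ (∃ a < t, ((C.1 x : ℕ)) = (i + a) % (2*n))).card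

/-- The chord of `x` reaches the chord of `u` in the directed intersection graph
(of the whole diagram); endpoints of the same chord represent the same vertex. -/
def ReachChord {n : ℕ} (D : OrientedChordDiagram n) (x u : Fin (2*n)) : Prop :=
  u = x ∨ u = D.1.1 x ∨ Relation.ReflTransGen (fun a b => OverD D a b) x u

/-- The chords of `x` and `u` lie in the same strong component. -/
def MutualReach {n : ℕ} (D : OrientedChordDiagram n) (x u : Fin (2*n)) : Prop :=
  ReachChord D x u ∧ ReachChord D u x

/-- The number of single-chord strong components of `D`. -/
noncomputable def singleCount (n : ℕ) (D : OrientedChordDiagram n) : ℕ :=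
  (Finset.univ.filter fun x : Fin (2*n) =>
    x < D.1.1 x ∧ ∀ u : Fin (2*n), u ≠ x → u ≠ D.1.1 x → ¬ MutualReach D x u).card

/-! For `x ≠ y` let `A` be the shorter arc between `x` and `y` and `L = k + j` its number of points.
If `⟨x, y⟩` is a chord crossed by fewer than `k` chords of length at least `k`, then all but fewer
than `k` points of `A` have their partner in `A` or within distance `k`, one of at most `L + 2k`
choices among about `2n`. If `j ≤ n / 288`, expose `j / 2 + 1` chords meeting such points: the
conditional probability is `O((k ^ 2 + j) / n) * 2 ^ (-j)`. If `j` is larger, some block of `2√n`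
points of `A` consists of such points, which is exponentially unlikely in `√n`. A pair `x, y` is a
chord with probability `O(1 / n)`, so summing over all pairs gives a failure probability of order
`(k ^ 2 + 1) / n + n ^ 2 * (3 / 4) ^ √n`, which tends to `0`.

A chord is crossed by at most as many chords as its length, so the `k`-core only contains chords of
length at least `k`; if these cross one another often enough, they form the `k`-core. -/

open Equiv
open scoped Nat

theorem card_sdiff_pair {α : Type*} [DecidableEq α] {V : Finset α} {b c : α} (hb : b ∈ V)
    (hc : c ∈ V) (hne : b ≠ c) : #(V \ {b, c}) = #V - 2 := by
  rw [card_sdiff_of_subset (by simp [insert_subset_iff, hb, hc]), card_pair hne]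

theorem doubleFactorial_two_mul_succ_sub_one (n : ℕ) :
    (2 * (n + 1) - 1)‼ = (2 * n + 1) * (2 * n - 1)‼ := by
  cases n with
  | zero => rfl
  | succ n => exact Nat.doubleFactorial_add_two (2 * n + 1)

section Matchings

variable {α : Type*} [Fintype α] [DecidableEq α]

/-- The perfect matchings of the points of `V`, encoded as the involutions of the ambient type whose
non-fixed points are exactly those of `V`; deleting a chord then stays inside one type. -/
def matchingsOn (V : Finset α) : Finset (Perm α) :=
  {σ | (∀ a, σ (σ a) = a) ∧ σ.support = V}

variable {V A B : Finset α} {σ : Perm α} {a b c : α}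

theorem mem_matchingsOn :
    σ ∈ matchingsOn V ↔ (∀ a, σ (σ a) = a) ∧ ∀ a, σ a ≠ a ↔ a ∈ V := by
  simp only [matchingsOn, mem_filter, mem_univ, true_and, Finset.ext_iff, Perm.mem_support]

theorem apply_mem_of_mem_matchingsOn (hσ : σ ∈ matchingsOn V) (ha : a ∈ V) : σ a ∈ V := by
  rw [mem_matchingsOn] at hσ
  rw [← hσ.2, hσ.1]
  exact ((hσ.2 a).2 ha).symm

theorem swap_mul_apply_of_notMem_pair (hσ : σ ∈ matchingsOn V) (hbc : σ b = c)
    (ha : a ∉ ({b, c} : Finset α)) : (swap b c * σ) a = σ a := by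
  have hinv := (mem_matchingsOn.1 hσ).1
  simp only [mem_insert, mem_singleton, not_or] at ha
  refine swap_apply_of_ne_of_ne (fun h => ha.2 ?_) fun h => ha.1 ?_
  · rw [← hinv a, h, hbc]
  · exact σ.injective (h.trans hbc.symm)

theorem swap_mul_mem_matchingsOn_sdiff (hσ : σ ∈ matchingsOn V) (hbc : σ b = c) :
    swap b c * σ ∈ matchingsOn (V \ {b, c}) := by
  obtain ⟨hinv, hsupp⟩ := mem_matchingsOn.1 hσ
  have hcb : σ c = b := by rw [← hbc, hinv]
  have hfix : ∀ a ∈ ({b, c} : Finset α), (swap b c * σ) a = a := by simp [hbc, hcb]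
  have hmap : ∀ a ∉ ({b, c} : Finset α), σ a ∉ ({b, c} : Finset α) := fun a ha h => ha <| by
    rw [← hinv a]
    rcases (by simpa using h : σ a = b ∨ σ a = c) with h | h <;> simp [h, hbc, hcb]
  refine mem_matchingsOn.2 ⟨fun a => ?_, fun a => ?_⟩ <;>
    by_cases ha : a ∈ ({b, c} : Finset α)
  · rw [hfix a ha, hfix a ha]
  · rw [swap_mul_apply_of_notMem_pair hσ hbc ha,
      swap_mul_apply_of_notMem_pair hσ hbc (hmap a ha), hinv]
  · simp only [hfix a ha, Finset.mem_sdiff, ha]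
    tauto
  · simp only [swap_mul_apply_of_notMem_pair hσ hbc ha, Finset.mem_sdiff, ha, hsupp]
    tauto

theorem swap_mul_mem_matchingsOn (hσ : σ ∈ matchingsOn (V \ {b, c})) (hb : b ∈ V) (hc : c ∈ V)
    (hne : b ≠ c) : swap b c * σ ∈ matchingsOn V ∧ (swap b c * σ) b = c := by
  simp only [matchingsOn, mem_filter, mem_univ, true_and] at hσ ⊢
  have hdisj : Perm.Disjoint (swap b c) σ := by
    rw [Perm.disjoint_iff_disjoint_support, Perm.support_swap hne, hσ.2]
    exact Finset.disjoint_sdiff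
  have hσb : σ b = b := Perm.notMem_support.1 (by simp [hσ.2])
  refine ⟨⟨fun a => ?_, ?_⟩, by simp [hσb]⟩
  · rw [← Perm.mul_apply, hdisj.commute.symm.mul_mul_mul_comm, swap_mul_self, one_mul]
    exact hσ.1 a
  · rw [hdisj.support_mul, Perm.support_swap hne, hσ.2]
    exact Finset.union_sdiff_of_subset (by simp [insert_subset_iff, hb, hc])

theorem card_matchingsOn_apply_eq (hb : b ∈ V) (hc : c ∈ V) (hne : b ≠ c) :
    #{σ ∈ matchingsOn V | σ b = c} = #(matchingsOn (V \ {b, c})) := by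
  refine card_nbij' (swap b c * ·) (swap b c * ·) (fun σ hσ => ?_) (fun σ hσ => ?_)
    (fun σ _ => swap_mul_self_mul b c σ) fun σ _ => swap_mul_self_mul b c σ
  · rw [mem_coe, mem_filter] at hσ
    exact swap_mul_mem_matchingsOn_sdiff hσ.1 hσ.2
  · simpa using swap_mul_mem_matchingsOn hσ hb hc hne

theorem card_matchingsOn {n : ℕ} (hV : #V = 2 * n) : #(matchingsOn V) = (2 * n - 1)‼ := by
  induction n generalizing V with
  | zero =>
    obtain rfl : V = ∅ := by simpa using hV
    refine card_eq_one.2 ⟨1, Finset.ext fun σ => ?_⟩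
    simp only [matchingsOn, mem_filter, mem_univ, true_and, Perm.support_eq_empty_iff,
      mem_singleton, and_iff_right_iff_imp]
    rintro rfl
    simp
  | succ n ih =>
    obtain ⟨b, hb⟩ : V.Nonempty := card_pos.1 (by omega)
    have hmaps : ∀ σ ∈ matchingsOn V, σ b ∈ V.erase b := fun σ hσ =>
      mem_erase.2 ⟨((mem_matchingsOn.1 hσ).2 b).2 hb, apply_mem_of_mem_matchingsOn hσ hb⟩
    have hfiber : ∀ c ∈ V.erase b, #{σ ∈ matchingsOn V | σ b = c} = (2 * n - 1)‼ := by
      intro c hc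
      obtain ⟨hcb, hcV⟩ := mem_erase.1 hc
      rw [card_matchingsOn_apply_eq hb hcV hcb.symm, ih]
      rw [card_sdiff_pair hb hcV hcb.symm]
      omega
    rw [card_eq_sum_card_fiberwise hmaps, sum_congr rfl hfiber, sum_const, card_erase_of_mem hb, hV,
      doubleFactorial_two_mul_succ_sub_one, smul_eq_mul]
    rfl

theorem card_filter_matchingsOn_apply_eq_le {P Q : Perm α → Prop} [DecidablePred P]
    [DecidablePred Q] (h : ∀ σ ∈ matchingsOn V, σ b = c → P σ → Q (swap b c * σ)) :
    #{σ ∈ matchingsOn V | σ b = c ∧ P σ} ≤ #{σ ∈ matchingsOn (V \ {b, c}) | Q σ} := by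
  refine card_le_card_of_injOn (swap b c * ·) (fun σ hσ => ?_) (mul_right_injective _).injOn
  obtain ⟨hσ, hbc, hP⟩ := mem_filter.1 hσ
  exact mem_filter.2 ⟨swap_mul_mem_matchingsOn_sdiff hσ hbc, h σ hσ hbc hP⟩

variable {T : α → Finset α} {t : ℕ}

/-- The endpoints of the chords of `σ` that meet `B`: half its cardinality counts those chords. -/
def chordClosure (σ : Perm α) (B : Finset α) : Finset α := B ∪ B.image σ

theorem chordClosure_sdiff_pair_subset (hσ : σ ∈ matchingsOn V) (hbc : σ b = c) :
    chordClosure σ B \ {b, c} ⊆ chordClosure (swap b c * σ) (B \ {b, c}) := by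
  intro a ha
  obtain ⟨ha, hpair⟩ := Finset.mem_sdiff.1 ha
  rcases mem_union.1 ha with ha | ha
  · exact mem_union_left _ (Finset.mem_sdiff.2 ⟨ha, hpair⟩)
  · obtain ⟨a', ha', rfl⟩ := mem_image.1 ha
    have hpair' : a' ∉ ({b, c} : Finset α) := fun h => hpair <| by
      have hcb : σ c = b := by rw [← hbc, (mem_matchingsOn.1 hσ).1]
      rcases (by simpa using h : a' = b ∨ a' = c) with rfl | rfl <;> simp [hbc, hcb]
    exact mem_union_right _ (mem_image.2 ⟨a', Finset.mem_sdiff.2 ⟨ha', hpair'⟩,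
      swap_mul_apply_of_notMem_pair hσ hbc hpair'⟩)

-- Exposing `r` of the chords that meet `B` one at a time leaves at most `t` choices for each.
theorem card_filter_forall_apply_mem_le (hT : ∀ b ∈ B, #(T b) ≤ t) {r m : ℕ} (hBV : B ⊆ V)
    (hV : #V = 2 * (m + r)) :
    #{σ ∈ matchingsOn V | (∀ b ∈ B, σ b ∈ T b) ∧ 2 * r ≤ #(chordClosure σ B)} ≤
      t ^ r * (2 * m - 1)‼ := by
  induction r generalizing V B with
  | zero =>
    rw [pow_zero, one_mul, ← card_matchingsOn (n := m) hV]
    exact card_filter_le _ _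
  | succ r ih =>
    obtain rfl | ⟨b, hb⟩ := B.eq_empty_or_nonempty
    · simp [chordClosure]
    have hfiber : ∀ c ∈ T b, #{σ ∈ {σ ∈ matchingsOn V | (∀ b ∈ B, σ b ∈ T b) ∧
        2 * (r + 1) ≤ #(chordClosure σ B)} | σ b = c} ≤ t ^ r * (2 * m - 1)‼ := by
      intro c _
      simp only [filter_filter, and_comm (b := _ = c)]
      obtain hempty | ⟨σ₀, hmem⟩ := Finset.eq_empty_or_nonempty {σ ∈ matchingsOn V | σ b = c ∧
        (∀ b ∈ B, σ b ∈ T b) ∧ 2 * (r + 1) ≤ #(chordClosure σ B)}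
      · simp [hempty]
      obtain ⟨hσ₀, rfl, -⟩ := mem_filter.1 hmem
      have hcard : #(V \ {b, σ₀ b}) = 2 * (m + r) := by
        rw [card_sdiff_pair (hBV hb) (apply_mem_of_mem_matchingsOn hσ₀ (hBV hb))
          (((mem_matchingsOn.1 hσ₀).2 b).2 (hBV hb)).symm]
        omega
      refine (card_filter_matchingsOn_apply_eq_le fun σ hσ hbc hP => ⟨fun a ha => ?_, ?_⟩).trans
        (ih (fun a ha => hT a (Finset.mem_sdiff.1 ha).1) (sdiff_subset_sdiff hBV le_rfl) hcard)
      · obtain ⟨ha, hpair⟩ := Finset.mem_sdiff.1 ha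
        exact (swap_mul_apply_of_notMem_pair hσ hbc hpair).symm ▸ hP.1 a ha
      · have hsub := card_le_card (chordClosure_sdiff_pair_subset (B := B) hσ hbc)
        have hsdiff := le_card_sdiff {b, σ₀ b} (chordClosure σ B)
        have htwo := card_le_two (a := b) (b := σ₀ b)
        omega
    calc _ ≤ t ^ r * (2 * m - 1)‼ * #(T b) :=
          card_le_mul_card_image_of_maps_to (fun σ hσ => (mem_filter.1 hσ).2.1 b hb) _ hfiber
      _ ≤ t ^ r * (2 * m - 1)‼ * t := Nat.mul_le_mul_left _ (hT b hb)
      _ = t ^ (r + 1) * (2 * m - 1)‼ := by ring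

theorem exists_subset_disjoint_image (hσ : σ ∈ matchingsOn V) (hBV : B ⊆ V) {r : ℕ}
    (hr : 2 * r ≤ #B + 1) : ∃ R ⊆ B, #R = r ∧ Disjoint R (R.image σ) := by
  induction r generalizing B with
  | zero => exact ⟨∅, by simp⟩
  | succ r ih =>
    obtain ⟨b, hb⟩ : B.Nonempty := card_pos.1 (by omega)
    have hcard : 2 * r ≤ #(B \ {b, σ b}) + 1 := by
      have := le_card_sdiff {b, σ b} B
      have := card_le_two (a := b) (b := σ b)
      omega
    obtain ⟨R, hRB, hR, hdisj⟩ := ih (sdiff_subset.trans hBV) hcard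
    have hbR : b ∉ R := fun h => by simpa using hRB h
    have hσbR : σ b ∉ R := fun h => by simpa using hRB h
    obtain ⟨hinv, hsupp⟩ := mem_matchingsOn.1 hσ
    have hbσR : b ∉ R.image σ := fun h => by
      obtain ⟨a, ha, rfl⟩ := mem_image.1 h
      exact hσbR ((hinv a).symm ▸ ha)
    refine ⟨insert b R, insert_subset hb (hRB.trans sdiff_subset),
      by rw [card_insert_of_notMem hbR, hR], ?_⟩
    rw [image_insert, disjoint_insert_left, disjoint_insert_right, mem_insert, not_or]
    exact ⟨⟨((hsupp b).2 (hBV hb)).symm, hbσR⟩, hσbR, hdisj⟩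

theorem card_filter_many_apply_mem_le (hT : ∀ a ∈ A, #(T a) ≤ t) {r m : ℕ} (hAV : A ⊆ V)
    (hV : #V = 2 * (m + r)) :
    #{σ ∈ matchingsOn V | 2 * r ≤ #{a ∈ A | σ a ∈ T a} + 1} ≤
      (#A).choose r * (t ^ r * (2 * m - 1)‼) := by
  calc _ ≤ #((powersetCard r A).biUnion fun R => {σ ∈ matchingsOn V |
        (∀ a ∈ R, σ a ∈ T a) ∧ 2 * r ≤ #(chordClosure σ R)}) := by
        refine card_le_card fun σ hσ => ?_
        obtain ⟨hσ, hr⟩ := mem_filter.1 hσ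
        obtain ⟨R, hRB, hR, hdisj⟩ :=
          exists_subset_disjoint_image hσ ((filter_subset _ _).trans hAV) hr
        refine mem_biUnion.2 ⟨R, mem_powersetCard.2 ⟨hRB.trans (filter_subset _ _), hR⟩,
          mem_filter.2 ⟨hσ, fun a ha => (mem_filter.1 (hRB ha)).2, ?_⟩⟩
        rw [chordClosure, card_union_of_disjoint hdisj, card_image_of_injective _ σ.injective]
        omega
    _ ≤ #(powersetCard r A) * (t ^ r * (2 * m - 1)‼) :=
        card_biUnion_le_card_mul _ _ _ fun R hR =>
          have hRA := (mem_powersetCard.1 hR).1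
          card_filter_forall_apply_mem_le (fun a ha => hT a (hRA ha)) (hRA.trans hAV) hV
    _ = _ := by rw [card_powersetCard]

-- Split `A` into `k` blocks of `2 * r` points: if fewer than `k` points of `A` violate the
-- constraint, then some block contains no violation at all.
theorem card_filter_few_apply_notMem_le (hT : ∀ a ∈ A, #(T a) ≤ t) {k r m : ℕ} (hAV : A ⊆ V)
    (hV : #V = 2 * (m + r)) (hA : k * (2 * r) ≤ #A) :
    #{σ ∈ matchingsOn V | #{a ∈ A | σ a ∉ T a} < k} ≤ k * (t ^ r * (2 * m - 1)‼) := by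
  obtain ⟨e⟩ : Nonempty (Fin k × Fin (2 * r) ↪ A) :=
    Function.Embedding.nonempty_of_card_le (by simpa using hA)
  let block (q : Fin k) : Finset α := univ.image fun i => (e (q, i) : α)
  have hblock (q : Fin k) : block q ⊆ A := image_subset_iff.2 fun i _ => (e (q, i)).2
  have hcard (q : Fin k) : #(block q) = 2 * r := by
    rw [card_image_of_injective, card_univ, Fintype.card_fin]
    intro i j hij
    exact (Prod.ext_iff.1 (e.injective (Subtype.ext hij))).2
  calc _ ≤ #(univ.biUnion fun q => {σ ∈ matchingsOn V |
        (∀ a ∈ block q, σ a ∈ T a) ∧ 2 * r ≤ #(chordClosure σ (block q))}) := by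
        refine card_le_card fun σ hσ => ?_
        obtain ⟨hσ, hk⟩ := mem_filter.1 hσ
        obtain ⟨q, hq⟩ : ∃ q, ∀ i, σ (e (q, i)) ∈ T (e (q, i)) := by
          by_contra! hviol
          choose i hi using hviol
          refine hk.not_ge ?_
          rw [← Fintype.card_fin k, ← card_univ]
          refine card_le_card_of_injOn (fun q => (e (q, i q) : α))
            (fun q _ => mem_filter.2 ⟨(e _).2, hi q⟩) fun q _ q' _ h => ?_
          exact (Prod.ext_iff.1 (e.injective (Subtype.ext h))).1
        exact mem_biUnion.2 ⟨q, mem_univ q, mem_filter.2 ⟨hσ, by simpa [block] using hq,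
          (hcard q).ge.trans (card_le_card subset_union_left)⟩⟩
    _ ≤ #(univ : Finset (Fin k)) * (t ^ r * (2 * m - 1)‼) :=
        card_biUnion_le_card_mul _ _ _ fun q _ =>
          card_filter_forall_apply_mem_le (fun a ha => hT a (hblock q ha)) ((hblock q).trans hAV) hV
    _ = _ := by rw [card_univ, Fintype.card_fin]

end Matchings

section Arcs

variable {n : ℕ}

/-- The number of points on the shorter of the two open arcs between `x` and `y`. -/
def arcLength (x y : Fin (2 * n)) : ℕ :=
  min (max (x : ℕ) y - min (x : ℕ) y - 1) (2 * n - (max (x : ℕ) y - min (x : ℕ) y) - 1)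

/-- A shortest open arc between `x` and `y`; for antipodal points, the one not passing through
`0`. -/
def shortArc (x y : Fin (2 * n)) : Finset (Fin (2 * n)) :=
  if max (x : ℕ) y - min (x : ℕ) y ≤ n then Ioo (min x y) (max x y) else (Icc (min x y) (max x y))ᶜ

theorem arcLength_comm (x y : Fin (2 * n)) : arcLength x y = arcLength y x := by
  unfold arcLength
  omega

theorem arcLength_lt (x y : Fin (2 * n)) : arcLength x y < n := by
  unfold arcLength
  omega

theorem card_shortArc (x y : Fin (2 * n)) : #(shortArc x y) = arcLength x y := by
  unfold shortArc arcLength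
  split_ifs with h
  · rw [Fin.card_Ioo, Fin.coe_max, Fin.coe_min]
    omega
  · rw [card_compl, Fintype.card_fin, Fin.card_Icc, Fin.coe_max, Fin.coe_min]
    omega

theorem left_notMem_shortArc (x y : Fin (2 * n)) : x ∉ shortArc x y := by
  unfold shortArc
  split_ifs <;> simp +contextual [le_of_lt]

theorem right_notMem_shortArc (x y : Fin (2 * n)) : y ∉ shortArc x y := by
  unfold shortArc
  split_ifs <;> simp +contextual [le_of_lt]

theorem card_arcLength_eq_le (x : Fin (2 * n)) (l : ℕ) : #{y | y ≠ x ∧ arcLength x y = l} ≤ 2 := by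
  by_contra! h
  obtain ⟨a, ha, b, hb, c, hc, hab, hac, hbc⟩ := two_lt_card.1 h
  rw [mem_filter] at ha hb hc
  unfold arcLength at ha hb hc
  omega

theorem card_arcLength_lt_le (x : Fin (2 * n)) (k : ℕ) :
    #{y | y ≠ x ∧ arcLength x y < k} ≤ 2 * k := by
  have hmaps : ∀ y ∈ ({y | y ≠ x ∧ arcLength x y < k} : Finset _), arcLength x y ∈ range k :=
    fun y hy => mem_range.2 (mem_filter.1 hy).2.2
  simpa using card_le_mul_card_image_of_maps_to hmaps 2 fun l _ =>
    (card_le_card fun y hy => by simp_all).trans (card_arcLength_eq_le x l)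

theorem sum_arcLength_le {β : ℕ → ℝ} (hβ : ∀ l, 0 ≤ β l) (x : Fin (2 * n)) (k : ℕ) :
    ∑ y with y ≠ x ∧ k ≤ arcLength x y, β (arcLength x y) ≤ 2 * ∑ l ∈ Ico k n, β l := by
  have hmaps : ∀ y ∈ ({y | y ≠ x ∧ k ≤ arcLength x y} : Finset _), arcLength x y ∈ Ico k n :=
    fun y hy => mem_Ico.2 ⟨(mem_filter.1 hy).2.2, arcLength_lt x y⟩
  rw [← sum_fiberwise_of_maps_to hmaps, mul_sum]
  refine sum_le_sum fun l _ => ?_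
  rw [sum_congr rfl fun y hy => congrArg β (mem_filter.1 hy).2, sum_const, nsmul_eq_mul]
  gcongr
  · exact hβ l
  · exact_mod_cast (card_le_card fun y hy => by simp_all).trans (card_arcLength_eq_le x l)

/-- The partners of a point `z` of `shortArc x y` for which the chord at `z` is short or does not
cross the chord `⟨x, y⟩`. -/
def blockedPartners (k : ℕ) (x y z : Fin (2 * n)) : Finset (Fin (2 * n)) :=
  shortArc x y ∪ univ.filter fun w => w ≠ z ∧ arcLength z w < k

theorem card_blockedPartners_le (k : ℕ) (x y z : Fin (2 * n)) :
    #(blockedPartners k x y z) ≤ arcLength x y + 2 * k := by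
  refine (card_union_le _ _).trans ?_
  rw [card_shortArc]
  exact Nat.add_le_add_left (card_arcLength_lt_le z k) _

end Arcs

section Degree

variable {n k : ℕ} {C : ChordDiagram n} {S A : Finset (Fin (2 * n))} {x u : Fin (2 * n)}

theorem crosses_iff_xor_mem_shortArc :
    Crosses C x u ↔ Xor (u ∈ shortArc x (C.1 x)) (C.1 u ∈ shortArc x (C.1 x)) := by
  have hinv := C.2.1
  change Xor (Between x (C.1 x) u) (Between x (C.1 x) (C.1 u)) ↔ _
  by_cases hu : u = x ∨ u = C.1 x
  · rcases hu with rfl | rfl <;>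
      simp +contextual [Between, Xor, hinv, left_notMem_shortArc, right_notMem_shortArc, le_of_lt]
  · rw [not_or] at hu
    have hCu : C.1 u ≠ x ∧ C.1 u ≠ C.1 x :=
      ⟨fun h => hu.2 (by rw [← h, hinv]), fun h => hu.1 (by rw [← hinv u, h, hinv])⟩
    unfold shortArc
    split_ifs
    · simp only [Between, mem_Ioo]
    · simp only [Between, mem_compl, mem_Icc, Xor, Fin.ext_iff, Fin.lt_def, Fin.le_def, Fin.coe_max,
        Fin.coe_min, ne_eq] at hu hCu ⊢
      omega

theorem card_filter_lt_and_xor_mem (hS : ∀ x ∈ S, C.1 x ∈ S) :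
    #{u ∈ S | u < C.1 u ∧ Xor (u ∈ A) (C.1 u ∈ A)} = #{z ∈ A | C.1 z ∉ A ∧ z ∈ S} := by
  have hinv := C.2.1
  refine card_nbij' (fun u => if u ∈ A then u else C.1 u) (fun z => min z (C.1 z))
    (fun u hu => ?_) (fun z hz => ?_) (fun u hu => ?_) fun z hz => ?_
  · obtain ⟨huS, -, ⟨hu, hCu⟩ | ⟨hCu, hu⟩⟩ := mem_filter.1 hu
    · simp [hu, hCu, huS]
    · simp [hu, hCu, hinv, hS u huS]
  · obtain ⟨hzA, hCz, hzS⟩ := mem_filter.1 hz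
    rw [mem_coe, mem_filter]
    rcases lt_or_gt_of_ne (C.2.2 z) with h | h
    · simp [min_eq_right h.le, h, hinv, hzA, hCz, hS z hzS, Xor]
    · simp [min_eq_left h.le, h, hzA, hCz, hzS, Xor]
  · obtain ⟨-, hlt, ⟨hu, -⟩ | ⟨-, hu⟩⟩ := mem_filter.1 hu
    · simp [hu, hlt.le]
    · simp [hu, hinv, hlt.le]
  · obtain ⟨hzA, hCz, -⟩ := mem_filter.1 hz
    rcases min_choice z (C.1 z) with h | h <;> simp [h, hzA, hCz, hinv]

theorem degreeIn_eq_card (hS : ∀ x ∈ S, C.1 x ∈ S) (x : Fin (2 * n)) :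
    degreeIn C S x = #{z ∈ shortArc x (C.1 x) | C.1 z ∉ shortArc x (C.1 x) ∧ z ∈ S} := by
  rw [← card_filter_lt_and_xor_mem hS]
  simp only [degreeIn, crosses_iff_xor_mem_shortArc]

theorem degreeIn_le_chordLength (hS : ∀ x ∈ S, C.1 x ∈ S) (x : Fin (2 * n)) :
    degreeIn C S x ≤ chordLength C x := by
  rw [degreeIn_eq_card hS]
  exact (card_filter_le _ _).trans (card_shortArc x (C.1 x)).le

theorem apply_mem_lenAtLeast (hx : x ∈ lenAtLeast n k C) : C.1 x ∈ lenAtLeast n k C := by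
  refine mem_filter.2 ⟨mem_univ _, (mem_filter.1 hx).2.trans_eq ?_⟩
  change arcLength x (C.1 x) = arcLength (C.1 x) (C.1 (C.1 x))
  rw [C.2.1, arcLength_comm]

theorem degreeIn_lenAtLeast (C : ChordDiagram n) (k : ℕ) (x : Fin (2 * n)) :
    degreeIn C (lenAtLeast n k C) x =
      #{z ∈ shortArc x (C.1 x) | C.1 z ∉ blockedPartners k x (C.1 x) z} := by
  rw [degreeIn_eq_card fun _ => apply_mem_lenAtLeast]
  refine congrArg card (filter_congr fun z _ => ?_)
  have hlen : chordLength C z = arcLength z (C.1 z) := rfl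
  simp [blockedPartners, lenAtLeast, hlen, C.2.2 z]

theorem kCore_eq_lenAtLeast
    (hdeg : ∀ x ∈ lenAtLeast n k C, k ≤ degreeIn C (lenAtLeast n k C) x) :
    kCore n k C = lenAtLeast n k C := by
  ext x
  simp only [kCore, mem_filter, mem_univ, true_and]
  constructor
  · rintro ⟨S, ⟨hS, hdegS⟩, hx⟩
    exact mem_filter.2 ⟨mem_univ x, (hdegS x hx).trans (degreeIn_le_chordLength hS x)⟩
  · exact fun hx => ⟨_, ⟨fun _ => apply_mem_lenAtLeast, hdeg⟩, hx⟩

end Degree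

section UnionBound

variable {n : ℕ}

theorem card_chordDiagram_filter (P : (Fin (2 * n) → Fin (2 * n)) → Prop) [DecidablePred P] :
    #{C : ChordDiagram n | P C.1} =
      #((matchingsOn univ).filter fun σ : Perm (Fin (2 * n)) => P σ) := by
  refine card_bij (fun C _ => Function.Involutive.toPerm C.1 C.2.1) (fun C hC => ?_)
    (fun C _ D _ h => Subtype.ext (congrArg (fun σ : Perm (Fin (2 * n)) => ⇑σ) h)) fun σ hσ => ?_
  · exact mem_filter.2 ⟨mem_matchingsOn.2 ⟨C.2.1, fun a => iff_of_true (C.2.2 a) (mem_univ a)⟩,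
      (mem_filter.1 hC).2⟩
  · obtain ⟨hσ, hP⟩ := mem_filter.1 hσ
    obtain ⟨hinv, hsupp⟩ := mem_matchingsOn.1 hσ
    exact ⟨⟨σ, hinv, fun a => (hsupp a).2 (mem_univ a)⟩, mem_filter.2 ⟨mem_univ _, hP⟩,
      Equiv.ext fun _ => rfl⟩

theorem card_chordDiagram (n : ℕ) : #(univ : Finset (ChordDiagram n)) = (2 * n - 1)‼ := by
  have h := card_chordDiagram_filter (n := n) fun _ => True
  rwa [filter_true, filter_true, card_matchingsOn (n := n) (by simp)] at h

theorem prob_le_one (E : ChordDiagram n → Prop) : prob n E ≤ 1 :=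
  div_le_one_of_le₀ (mod_cast card_filter_le _ _) (Nat.cast_nonneg _)

theorem prob_mono {E F : ChordDiagram n → Prop} (h : ∀ C, E C → F C) : prob n E ≤ prob n F := by
  unfold prob
  gcongr
  exact h _

theorem prob_le_card_div {E : ChordDiagram n → Prop} {s : Finset (ChordDiagram n)}
    (h : ∀ C, E C → C ∈ s) : prob n E ≤ (#s : ℝ) / (2 * n - 1)‼ := by
  rw [prob, card_chordDiagram]
  gcongr
  exact fun C hC => h C (mem_filter.1 hC).2

theorem one_sub_prob_not_le (E : ChordDiagram n → Prop) : 1 - prob n (¬ E ·) ≤ prob n E := by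
  have hcard : (#(univ : Finset (ChordDiagram n)) : ℝ) ≠ 0 := by
    rw [card_chordDiagram]
    exact_mod_cast (Nat.doubleFactorial_pos _).ne'
  rw [sub_le_iff_le_add, prob, prob, ← add_div, one_le_div₀ (by positivity)]
  norm_cast
  rw [card_filter_add_card_filter_not]

theorem shortArc_subset_sdiff_pair (x y : Fin (2 * n)) : shortArc x y ⊆ univ \ {x, y} := by
  intro z hz
  rw [Finset.mem_sdiff, mem_insert, mem_singleton]
  refine ⟨mem_univ z, ?_⟩
  rintro (rfl | rfl)
  · exact left_notMem_shortArc _ _ hz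
  · exact right_notMem_shortArc _ _ hz

/-- The matchings of the points other than `x` and `y` for which fewer than `k` chords of length at
least `k` cross `⟨x, y⟩`. -/
def deficientMatchings (k : ℕ) (x y : Fin (2 * n)) : Finset (Perm (Fin (2 * n))) :=
  {σ ∈ matchingsOn (univ \ {x, y}) | #{z ∈ shortArc x y | σ z ∉ blockedPartners k x y z} < k}

theorem card_apply_eq_le_card_deficientMatchings (k : ℕ) (x y : Fin (2 * n)) :
    #{C : ChordDiagram n | C.1 x = y ∧
        #{z ∈ shortArc x y | C.1 z ∉ blockedPartners k x y z} < k} ≤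
      #(deficientMatchings k x y) := by
  rw [card_chordDiagram_filter fun f => f x = y ∧
    #{z ∈ shortArc x y | f z ∉ blockedPartners k x y z} < k]
  refine card_filter_matchingsOn_apply_eq_le fun σ hσ hxy hlt => hlt.trans_le' (le_of_eq ?_)
  refine congrArg card (filter_congr fun z hz => ?_)
  rw [swap_mul_apply_of_notMem_pair hσ hxy
    (Finset.mem_sdiff.1 (shortArc_subset_sdiff_pair x y hz)).2]

theorem prob_exists_degreeIn_lt_le_sum (n k : ℕ) :
    prob n (fun C => ∃ x ∈ lenAtLeast n k C, degreeIn C (lenAtLeast n k C) x < k) ≤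
      ∑ x : Fin (2 * n), ∑ y with y ≠ x ∧ k ≤ arcLength x y,
        (#(deficientMatchings k x y) : ℝ) / (2 * n - 1)‼ := by
  let E (x y : Fin (2 * n)) : Finset (ChordDiagram n) :=
    {C | C.1 x = y ∧ #{z ∈ shortArc x y | C.1 z ∉ blockedPartners k x y z} < k}
  let U := univ.biUnion fun x => (univ.filter fun y => y ≠ x ∧ k ≤ arcLength x y).biUnion (E x)
  have hU : #U ≤ ∑ x, ∑ y with y ≠ x ∧ k ≤ arcLength x y, #(deficientMatchings k x y) :=
    card_biUnion_le.trans <| sum_le_sum fun x _ => card_biUnion_le.trans <| sum_le_sum fun y _ =>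
      card_apply_eq_le_card_deficientMatchings k x y
  refine (prob_le_card_div (s := U) ?_).trans ?_
  · rintro C ⟨x, hx, hdeg⟩
    rw [degreeIn_lenAtLeast] at hdeg
    exact mem_biUnion.2 ⟨x, mem_univ x, mem_biUnion.2 ⟨C.1 x,
      mem_filter.2 ⟨mem_univ _, C.2.2 x, (mem_filter.1 hx).2⟩,
      mem_filter.2 ⟨mem_univ C, rfl, hdeg⟩⟩⟩
  · simp only [← sum_div, ← Nat.cast_sum]
    gcongr

variable {k : ℕ} {x y : Fin (2 * n)}

theorem card_univ_sdiff_pair {p : ℕ} (hxy : x ≠ y) (hn : n = p + 1) :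
    #((univ : Finset (Fin (2 * n))) \ {x, y}) = 2 * p := by
  rw [card_sdiff_pair (mem_univ x) (mem_univ y) hxy, card_univ, Fintype.card_fin]
  omega

theorem card_deficientMatchings_le_choose {r m : ℕ} (hxy : x ≠ y) (hn : n = m + r + 1)
    (hr : 2 * r + k ≤ arcLength x y + 2) :
    #(deficientMatchings k x y) ≤
      (arcLength x y).choose r * ((arcLength x y + 2 * k) ^ r * (2 * m - 1)‼) := by
  refine (card_le_card fun σ hσ => ?_).trans <| card_shortArc x y ▸
    card_filter_many_apply_mem_le (fun z _ => card_blockedPartners_le k x y z)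
      (shortArc_subset_sdiff_pair x y) (card_univ_sdiff_pair hxy hn)
  obtain ⟨hσ, hlt⟩ := mem_filter.1 hσ
  refine mem_filter.2 ⟨hσ, ?_⟩
  have hsplit := card_filter_add_card_filter_not (s := shortArc x y)
    fun z => σ z ∈ blockedPartners k x y z
  rw [card_shortArc] at hsplit
  omega

theorem card_deficientMatchings_le_mul {r m : ℕ} (hxy : x ≠ y) (hn : n = m + r + 1)
    (hr : k * (2 * r) ≤ arcLength x y) :
    #(deficientMatchings k x y) ≤ k * ((arcLength x y + 2 * k) ^ r * (2 * m - 1)‼) :=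
  card_filter_few_apply_notMem_le (fun z _ => card_blockedPartners_le k x y z)
    (shortArc_subset_sdiff_pair x y) (card_univ_sdiff_pair hxy hn) (by rwa [card_shortArc])

end UnionBound

section Estimates

theorem doubleFactorial_mul_pow_le (m r : ℕ) :
    (2 * m - 1)‼ * (2 * m + 1) ^ r ≤ (2 * (m + r) - 1)‼ := by
  induction r with
  | zero => simp
  | succ r ih =>
    calc (2 * m - 1)‼ * (2 * m + 1) ^ (r + 1)
        = (2 * m + 1) * ((2 * m - 1)‼ * (2 * m + 1) ^ r) := by ring
      _ ≤ (2 * (m + r) + 1) * (2 * (m + r) - 1)‼ := Nat.mul_le_mul (by omega) ih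
      _ = (2 * (m + (r + 1)) - 1)‼ := by
        rw [← add_assoc, doubleFactorial_two_mul_succ_sub_one]

theorem pow_mul_choose_le (l r : ℕ) : r ^ r * l.choose r ≤ (3 * l) ^ r := by
  have hpow : (r : ℝ) ^ r / r ! ≤ 3 ^ r := by
    calc (r : ℝ) ^ r / r ! ≤ Real.exp r := Real.pow_div_factorial_le_exp _ r.cast_nonneg _
      _ = Real.exp 1 ^ r := by rw [← Real.exp_nat_mul, mul_one]
      _ ≤ 3 ^ r := by gcongr; exact Real.exp_one_lt_three.le
  have hreal : (r : ℝ) ^ r * l.choose r ≤ (3 * l) ^ r := by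
    calc (r : ℝ) ^ r * l.choose r ≤ r ^ r * (l ^ r / r !) := by
          gcongr
          exact Nat.choose_le_pow_div r l
      _ = (r ^ r / r !) * l ^ r := by ring
      _ ≤ 3 ^ r * l ^ r := by gcongr
      _ = (3 * l) ^ r := (mul_pow ..).symm
  exact_mod_cast hreal

theorem mul_div_doubleFactorial_le {n m r : ℕ} (hn : n = m + r + 1) (a : ℕ) :
    (a * (2 * m - 1)‼ : ℝ) / (2 * n - 1)‼ ≤ a / (2 * m + 1) ^ r / n := by
  have hle : n * ((2 * m - 1)‼ * (2 * m + 1) ^ r) ≤ (2 * n - 1)‼ := by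
    rw [hn, doubleFactorial_two_mul_succ_sub_one]
    exact Nat.mul_le_mul (by omega) (doubleFactorial_mul_pow_le m r)
  have hle' : (n : ℝ) * ((2 * m - 1)‼ * (2 * m + 1) ^ r) ≤ (2 * n - 1)‼ := mod_cast hle
  have hn0 : (0 : ℝ) < n := by rw [hn]; positivity
  have hpos (p : ℕ) : (0 : ℝ) < (p‼ : ℕ) := mod_cast Nat.doubleFactorial_pos p
  rw [div_div, div_le_div_iff₀ (hpos _) (by positivity)]
  calc (a * (2 * m - 1)‼ : ℝ) * ((2 * m + 1) ^ r * n)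
      = a * (n * ((2 * m - 1)‼ * (2 * m + 1) ^ r)) := by ring
    _ ≤ a * (2 * n - 1)‼ := by gcongr

variable {n k : ℕ}

theorem choose_mul_pow_le {j r : ℕ} (hr : 0 < r) (hj : j ≤ 2 * r) :
    (k + j).choose r * (k + j + 2 * k) ^ r ≤ (18 * (k ^ 2 + 2 * j)) ^ r := by
  have hbase : 3 * (k + j) * (k + j + 2 * k) ≤ r * (18 * (k ^ 2 + 2 * j)) := by
    calc 3 * (k + j) * (k + j + 2 * k) ≤ 18 * (1 * k ^ 2 + j * j) := by
          zify
          nlinarith [sq_nonneg ((k : ℤ) - j)]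
      _ ≤ 18 * (r * k ^ 2 + 2 * r * j) := by gcongr; exact hr
      _ = r * (18 * (k ^ 2 + 2 * j)) := by ring
  refine le_of_mul_le_mul_left ?_ (pow_pos hr r)
  calc r ^ r * ((k + j).choose r * (k + j + 2 * k) ^ r)
      = r ^ r * (k + j).choose r * (k + j + 2 * k) ^ r := by ring
    _ ≤ (3 * (k + j)) ^ r * (k + j + 2 * k) ^ r :=
        Nat.mul_le_mul_right _ (pow_mul_choose_le _ _)
    _ ≤ (r * (18 * (k ^ 2 + 2 * j))) ^ r := by rw [← mul_pow]; gcongr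
    _ = r ^ r * (18 * (k ^ 2 + 2 * j)) ^ r := mul_pow ..

theorem pow_half_add_one_le {q : ℝ} (hq₀ : 0 ≤ q) (hq : q ≤ 1 / 4) (j : ℕ) :
    q ^ (j / 2 + 1) ≤ 2 * q * (1 / 2) ^ j := by
  calc q ^ (j / 2 + 1) = q * q ^ (j / 2) := pow_succ' ..
    _ ≤ q * (1 / 4) ^ (j / 2) := by gcongr
    _ = 2 * q * (1 / 2) ^ (2 * (j / 2) + 1) := by rw [pow_succ, pow_mul]; norm_num; ring
    _ ≤ 2 * q * (1 / 2) ^ j := by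
        gcongr ?_ * ?_
        exact pow_le_pow_of_le_one (by norm_num) (by norm_num) (by omega)

variable {x y : Fin (2 * n)}

theorem card_deficientMatchings_div_le_of_short (hn : 16 ≤ n) (hk : (576 * k) ^ 2 ≤ n) {j : ℕ}
    (hj : 288 * j ≤ n) (hxy : x ≠ y) (hl : arcLength x y = k + j) :
    (#(deficientMatchings k x y) : ℝ) / (2 * n - 1)‼ ≤
      36 * (k ^ 2 + 2 * j) / n * (1 / 2) ^ j / n := by
  obtain ⟨m, hm⟩ : ∃ m, n = m + (j / 2 + 1) + 1 := ⟨n - (j / 2 + 2), by omega⟩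
  have hcount := card_deficientMatchings_le_choose (k := k) hxy hm (by omega)
  rw [hl, ← mul_assoc] at hcount
  have hn0 : (0 : ℝ) < n := by positivity
  set q : ℝ := 18 * (k ^ 2 + 2 * j) / n with hqdef
  have hq : q ≤ 1 / 4 := by
    rw [hqdef, div_le_iff₀ hn0]
    have hkR : (576 * k : ℝ) ^ 2 ≤ n := mod_cast hk
    have hjR : (288 * j : ℝ) ≤ n := mod_cast hj
    linarith
  calc (#(deficientMatchings k x y) : ℝ) / (2 * n - 1)‼
      ≤ ((18 * (k ^ 2 + 2 * j)) ^ (j / 2 + 1) * (2 * m - 1)‼ : ℕ) / (2 * n - 1)‼ := by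
        gcongr
        exact hcount.trans <| Nat.mul_le_mul_right _ <| choose_mul_pow_le (by omega) (by omega)
    _ ≤ (18 * (k ^ 2 + 2 * j) : ℝ) ^ (j / 2 + 1) / (2 * m + 1) ^ (j / 2 + 1) / n := by
        push_cast
        exact_mod_cast mul_div_doubleFactorial_le hm ((18 * (k ^ 2 + 2 * j)) ^ (j / 2 + 1))
    _ ≤ (18 * (k ^ 2 + 2 * j) : ℝ) ^ (j / 2 + 1) / n ^ (j / 2 + 1) / n := by
        gcongr
        exact_mod_cast (by omega : n ≤ 2 * m + 1)
    _ = q ^ (j / 2 + 1) / n := by rw [hqdef, div_pow]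
    _ ≤ 2 * q * (1 / 2) ^ j / n := by
        gcongr
        exact pow_half_add_one_le (by positivity) hq j
    _ = _ := by rw [hqdef]; ring

theorem card_deficientMatchings_div_le_of_long (hn : 16 ≤ n) (hk : (576 * k) ^ 2 ≤ n) {j : ℕ}
    (hj : n ≤ 288 * j) (hxy : x ≠ y) (hl : arcLength x y = k + j) :
    (#(deficientMatchings k x y) : ℝ) / (2 * n - 1)‼ ≤ k * (3 / 4) ^ n.sqrt / n := by
  set r := n.sqrt
  have hkr : 576 * k ≤ r := Nat.le_sqrt'.2 hk
  have hrr : r * r ≤ n := n.sqrt_le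
  have hr4 : 4 * r ≤ n := (Nat.mul_le_mul_right r (Nat.le_sqrt.2 hn)).trans hrr
  obtain ⟨m, hm⟩ : ∃ m, n = m + r + 1 := ⟨n - (r + 1), by omega⟩
  have hblocks : k * (2 * r) ≤ arcLength x y := by nlinarith
  have hcount := card_deficientMatchings_le_mul hxy hm hblocks
  rw [← mul_assoc] at hcount
  have hratio : 4 * (arcLength x y + 2 * k) ≤ 3 * (2 * m + 1) := by
    have := arcLength_lt x y
    omega
  have hratio' : (4 * (arcLength x y + 2 * k) : ℝ) ≤ 3 * (2 * m + 1) := mod_cast hratio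
  calc (#(deficientMatchings k x y) : ℝ) / (2 * n - 1)‼
      ≤ (k * (arcLength x y + 2 * k) ^ r * (2 * m - 1)‼ : ℕ) / (2 * n - 1)‼ := by gcongr
    _ ≤ (k * (arcLength x y + 2 * k) ^ r : ℕ) / (2 * m + 1) ^ r / n := by
        push_cast
        exact_mod_cast mul_div_doubleFactorial_le hm (k * (arcLength x y + 2 * k) ^ r)
    _ = k * ((arcLength x y + 2 * k) / (2 * m + 1)) ^ r / n := by
        push_cast
        rw [div_pow, mul_div_assoc]
    _ ≤ k * (3 / 4) ^ r / n := by
        gcongr ?_ * ?_ ^ r / _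
        rw [div_le_div_iff₀ (by positivity) (by norm_num)]
        linarith

end Estimates

section Limit

variable {n k : ℕ}

/-- A bound for `n` times the probability that a fixed chord cutting off `l` points occurs and is
crossed by fewer than `k` chords of length at least `k`. The first summand accounts for
`l ≤ k + n / 288`, the second for larger `l`. -/
noncomputable def deficiencyBound (n k l : ℕ) : ℝ :=
  36 * (k ^ 2 + 2 * (l - k : ℕ)) / n * (1 / 2) ^ (l - k) + n * (3 / 4) ^ n.sqrt

theorem deficiencyBound_nonneg (n k l : ℕ) : 0 ≤ deficiencyBound n k l := by
  unfold deficiencyBound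
  positivity

theorem card_deficientMatchings_div_le (hn : 16 ≤ n) (hk : (576 * k) ^ 2 ≤ n) {x y : Fin (2 * n)}
    (hxy : x ≠ y) (hl : k ≤ arcLength x y) :
    (#(deficientMatchings k x y) : ℝ) / (2 * n - 1)‼ ≤ deficiencyBound n k (arcLength x y) / n := by
  obtain ⟨j, hj⟩ := Nat.exists_eq_add_of_le hl
  rw [deficiencyBound, hj, Nat.add_sub_cancel_left]
  obtain hshort | hlong := le_total (288 * j) n
  · refine (card_deficientMatchings_div_le_of_short hn hk hshort hxy hj).trans ?_
    gcongr
    exact le_add_of_nonneg_right (by positivity)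
  · have hkn : k ≤ n := hl.trans (arcLength_lt x y).le
    refine (card_deficientMatchings_div_le_of_long hn hk hlong hxy hj).trans ?_
    gcongr
    refine le_add_of_nonneg_of_le (by positivity) ?_
    gcongr

theorem sum_range_mul_half_pow_le (N : ℕ) : ∑ j ∈ range N, (j : ℝ) * (1 / 2) ^ j ≤ 2 := by
  have hsum := hasSum_coe_mul_geometric_of_norm_lt_one (r := (1 / 2 : ℝ)) (by norm_num)
  refine (sum_le_hasSum _ (fun j _ => by positivity) hsum).trans_eq (by norm_num)

theorem sum_deficiencyBound_le (n k : ℕ) :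
    ∑ l ∈ Ico k n, deficiencyBound n k l ≤
      72 * (k ^ 2 + 2) / n + n ^ 2 * (3 / 4) ^ n.sqrt := by
  have hgeom : ∑ j ∈ range (n - k), (1 / 2 : ℝ) ^ j ≤ 2 := sum_geometric_two_le _
  have harith := sum_range_mul_half_pow_le (n - k)
  calc ∑ l ∈ Ico k n, deficiencyBound n k l
      = ∑ j ∈ range (n - k), (36 / n * (k ^ 2 * (1 / 2 : ℝ) ^ j + 2 * ((j : ℝ) * (1 / 2) ^ j)) +
          n * (3 / 4) ^ n.sqrt) := by
        rw [sum_Ico_eq_sum_range]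
        refine sum_congr rfl fun j _ => ?_
        rw [deficiencyBound, Nat.add_sub_cancel_left]
        ring
    _ = 36 / n * (k ^ 2 * ∑ j ∈ range (n - k), (1 / 2 : ℝ) ^ j +
          2 * ∑ j ∈ range (n - k), (j : ℝ) * (1 / 2) ^ j) +
          (n - k : ℕ) * (n * (3 / 4) ^ n.sqrt) := by
        rw [sum_add_distrib, ← mul_sum, sum_add_distrib, ← mul_sum, ← mul_sum, sum_const,
          card_range, nsmul_eq_mul]
    _ ≤ 36 / n * (k ^ 2 * 2 + 2 * 2) + n * (n * (3 / 4) ^ n.sqrt) := by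
        gcongr
        exact Nat.sub_le n k
    _ = _ := by ring

theorem prob_exists_degreeIn_lt_le (hn : 16 ≤ n) (hk : (576 * k) ^ 2 ≤ n) :
    prob n (fun C => ∃ x ∈ lenAtLeast n k C, degreeIn C (lenAtLeast n k C) x < k) ≤
      4 * (72 * (k ^ 2 + 2) / n + n ^ 2 * (3 / 4) ^ n.sqrt) := by
  calc prob n _
      ≤ ∑ x : Fin (2 * n), ∑ y with y ≠ x ∧ k ≤ arcLength x y,
          deficiencyBound n k (arcLength x y) / n := by
        refine (prob_exists_degreeIn_lt_le_sum n k).trans ?_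
        refine sum_le_sum fun x _ => sum_le_sum fun y hy => ?_
        obtain ⟨hyx, hl⟩ := (mem_filter.1 hy).2
        exact card_deficientMatchings_div_le hn hk hyx.symm hl
    _ ≤ ∑ _x : Fin (2 * n), 2 * (∑ l ∈ Ico k n, deficiencyBound n k l) / n := by
        simp only [← sum_div]
        gcongr
        exact sum_arcLength_le (deficiencyBound_nonneg n k) _ k
    _ = 4 * ∑ l ∈ Ico k n, deficiencyBound n k l := by
        rw [sum_const, card_univ, Fintype.card_fin, nsmul_eq_mul]
        push_cast
        field_simp
        ring
    _ ≤ _ := by gcongr; exact sum_deficiencyBound_le n k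

theorem tendsto_sq_mul_pow_sqrt :
    Tendsto (fun n : ℕ => (n : ℝ) ^ 2 * (3 / 4) ^ n.sqrt) atTop (nhds 0) := by
  have hsqrt : Tendsto (fun n : ℕ => n.sqrt + 1) atTop atTop :=
    tendsto_atTop_atTop.2 fun b => ⟨b ^ 2, fun n hn => (Nat.le_sqrt'.2 hn).trans (Nat.le_succ _)⟩
  have hpow := (tendsto_pow_const_mul_const_pow_of_abs_lt_one 4 (r := (3 / 4 : ℝ))
    (by norm_num [abs_of_pos])).comp hsqrt
  refine squeeze_zero (fun n => by positivity) (fun n => ?_)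
    (by simpa only [mul_zero] using hpow.const_mul (4 / 3))
  have hlt : (n : ℝ) ≤ (n.sqrt + 1) ^ 2 := mod_cast (Nat.lt_succ_sqrt' n).le
  calc (n : ℝ) ^ 2 * (3 / 4) ^ n.sqrt ≤ ((n.sqrt + 1) ^ 2) ^ 2 * (3 / 4) ^ n.sqrt := by gcongr
    _ = 4 / 3 * (((n.sqrt + 1 : ℕ) : ℝ) ^ 4 * (3 / 4) ^ (n.sqrt + 1)) := by push_cast; ring

theorem tendsto_failure_bound {k : ℕ → ℕ}
    (hk : Tendsto (fun n : ℕ => (k n : ℝ) ^ 2 / n) atTop (nhds 0)) :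
    Tendsto (fun n : ℕ => 4 * (72 * ((k n : ℝ) ^ 2 + 2) / n + n ^ 2 * (3 / 4) ^ n.sqrt))
      atTop (nhds 0) := by
  have hlim := (((hk.add (tendsto_const_div_atTop_nhds_zero_nat 2)).const_mul 72).add
    tendsto_sq_mul_pow_sqrt).const_mul 4
  simp only [add_zero, mul_zero] at hlim
  exact hlim.congr fun n => by ring

theorem eventually_sq_le {k : ℕ → ℕ}
    (hk : Tendsto (fun n : ℕ => (k n : ℝ) ^ 2 / n) atTop (nhds 0)) (c : ℕ) :
    ∀ᶠ n : ℕ in atTop, (c * k n) ^ 2 ≤ n := by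
  have hpos : (0 : ℝ) < 1 / (c ^ 2 + 1) := by positivity
  filter_upwards [hk.eventually_lt_const hpos, eventually_gt_atTop 0] with n hlt hn
  rw [div_lt_div_iff₀ (by positivity) (by positivity)] at hlt
  have hreal : (c * k n : ℝ) ^ 2 ≤ n := by nlinarith
  exact_mod_cast hreal

end Limit

theorem stmt4 (k : ℕ → ℕ)
    (hk : Filter.Tendsto (fun n : ℕ => ((k n : ℝ))^2 / (n : ℝ)) Filter.atTop (nhds 0)) :
    Filter.Tendsto
      (fun n : ℕ => prob n (fun C =>
        (∀ x ∈ lenAtLeast n (k n) C, k n ≤ degreeIn C (lenAtLeast n (k n) C) x) ∧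
        kCore n (k n) C = lenAtLeast n (k n) C))
      Filter.atTop (nhds 1) := by
  have hlow : Tendsto (fun n : ℕ => 1 - 4 * (72 * ((k n : ℝ) ^ 2 + 2) / n +
      n ^ 2 * (3 / 4) ^ n.sqrt)) atTop (nhds 1) := by
    simpa only [sub_zero] using (tendsto_failure_bound hk).const_sub 1
  refine tendsto_of_tendsto_of_tendsto_of_le_of_le' hlow tendsto_const_nhds ?_
    (.of_forall fun n => prob_le_one _)
  filter_upwards [eventually_ge_atTop 16, eventually_sq_le hk 576] with n hn hkn
  refine (sub_le_sub_left (prob_exists_degreeIn_lt_le hn hkn) 1).trans ?_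
  refine (one_sub_prob_not_le _).trans' (sub_le_sub_left (prob_mono fun C => ?_) 1)
  contrapose!
  exact fun hdeg => ⟨hdeg, kCore_eq_lenAtLeast hdeg⟩
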